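/- Let 2 ≤ d1 ≤ d2 and let C be a positive semidefinite matrix on ℂ^{d1}⊗ℂ^{d2}. If (k−1)d2 < rank(C) ≤ k(d2−1) for some 2 ≤ k ≤ d1, then there exists a unitary U on ℂ^{d1}⊗ℂ^{d2} such that for every diagonal matrix D on ℂ^{d1}⊗ℂ^{d2} whose diagonal entries are a permutation of the eigenvalues of C (with multiplicity), the vector λ(tr_1[UCU*]) ⊕ λ(tr_2[UCU*]) is NOT majorized by λ(tr_1[D]) ⊕ λ(tr_2[D]). -/

import Mathlib

open Matrix Finset Kronecker
open scoped ComplexOrder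

/-- The first partial trace of a matrix on `ℂ^{d1} ⊗ ℂ^{d2}` (index pairs `(i,s)` ordered
lexicographically): `(tr_1 C)_{s,t} = ∑_i C_{(i,s),(i,t)}`. -/
noncomputable def ptrace1 {d1 d2 : ℕ} (C : Matrix (Fin d1 × Fin d2) (Fin d1 × Fin d2) ℂ) :
    Matrix (Fin d2) (Fin d2) ℂ :=
  Matrix.of fun s t => ∑ i : Fin d1, C (i, s) (i, t)

/-- The second partial trace: `(tr_2 C)_{i,j} = ∑_s C_{(i,s),(j,s)}`. -/
noncomputable def ptrace2 {d1 d2 : ℕ} (C : Matrix (Fin d1 × Fin d2) (Fin d1 × Fin d2) ℂ) :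
    Matrix (Fin d1) (Fin d1) ℂ :=
  Matrix.of fun i j => ∑ s : Fin d2, C (i, s) (j, s)

/-- The sum of the `k` largest entries of the vector `x` (the largest value of a sum of `k`
entries of `x`), i.e. `∑_{i=1}^k x_i^↓`. -/
noncomputable def maxSum {ι : Type*} [Fintype ι] (x : ι → ℝ) (k : ℕ) : ℝ :=
  sSup {s : ℝ | ∃ A : Finset ι, A.card = k ∧ s = ∑ i ∈ A, x i}

/-- `x ≺ y` (majorization): for every `k`, the sum of the `k` largest entries of `x` is at
most the sum of the `k` largest entries of `y`, and the total sums are equal. -/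
def Majorizes {ι κ : Type*} [Fintype ι] [Fintype κ] (x : ι → ℝ) (y : κ → ℝ) : Prop :=
  (∀ k : ℕ, maxSum x k ≤ maxSum y k) ∧ ∑ i, x i = ∑ j, y j

/-- `x ≺_w y` (weak majorization). -/
def WeakMajorizes {ι κ : Type*} [Fintype ι] [Fintype κ] (x : ι → ℝ) (y : κ → ℝ) : Prop :=
  ∀ k : ℕ, maxSum x k ≤ maxSum y k

/-!
Write `m = d2 - 1`. Arrange the eigenvalues of `C` on a `d1 × d2` grid so that the `m` largest ones
fill the row `i₀` except for the column `s₀`, and all nonzero ones lie in `k` rows and avoid the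
column `s₀`. Let `c` be the least nonzero eigenvalue; it sits at a place `p` outside the row `i₀`.
Starting from this diagonal matrix, a unitary acting on the span of `e_p` and `e_(i₀, s₀)` averages
the entries at `p` and `(i₀, s₀)`. The off-diagonal entries it creates are invisible to both
partial traces, as `p` and `(i₀, s₀)` differ in both coordinates. Now the row `i₀` sums to more than
the `m` largest eigenvalues, and `k` rows together with `m` columns sum to `2 tr C - c / 2`.

If the row and column sums of a diagonal `D` majorize these, the first fact forces some row or
column of `D` to have more than `m` nonzero entries. As there are more than `(k - 1) d2` nonzero
entries, more than `k + m` rows and columns are nonzero, each of them with sum at least `c`, so any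
`k + m` of them sum to at most `2 tr C - c < 2 tr C - c / 2`.
-/

section MaxSum

theorem finite_setOf_sum {ι : Type*} [Finite ι] (x : ι → ℝ) (k : ℕ) :
    {s : ℝ | ∃ A : Finset ι, #A = k ∧ s = ∑ i ∈ A, x i}.Finite :=
  (Set.finite_range fun A : Finset ι => ∑ i ∈ A, x i).subset <| by
    rintro _ ⟨A, -, rfl⟩
    exact ⟨A, rfl⟩

variable {ι κ : Type*} [Fintype ι] [Fintype κ] {x : ι → ℝ} {A : Finset ι} {k : ℕ}

theorem sum_le_maxSum (x : ι → ℝ) (A : Finset ι) : ∑ i ∈ A, x i ≤ maxSum x #A :=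
  le_csSup (finite_setOf_sum x _).bddAbove ⟨A, rfl, rfl⟩

theorem exists_sum_eq_maxSum (x : ι → ℝ) (hk : k ≤ Fintype.card ι) :
    ∃ A : Finset ι, #A = k ∧ ∑ i ∈ A, x i = maxSum x k := by
  obtain ⟨B, -, hB⟩ := exists_subset_card_eq (s := (univ : Finset ι)) hk
  have hne : {s : ℝ | ∃ A : Finset ι, #A = k ∧ s = ∑ i ∈ A, x i}.Nonempty := ⟨_, B, hB, rfl⟩
  obtain ⟨A, hA, hsum⟩ := hne.csSup_mem (finite_setOf_sum x k)
  exact ⟨A, hA, hsum.symm⟩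

theorem sum_le_maxSum_of_card_le (hx : 0 ≤ x) (hA : #A ≤ k) (hk : k ≤ Fintype.card ι) :
    ∑ i ∈ A, x i ≤ maxSum x k := by
  obtain ⟨B, hAB, rfl⟩ := exists_superset_card_eq hA hk
  exact (sum_le_sum_of_subset_of_nonneg hAB fun i _ _ => hx i).trans (sum_le_maxSum x B)

theorem maxSum_card_le_sum (hA : ∀ i ∈ A, ∀ j ∉ A, x j ≤ x i) :
    maxSum x #A ≤ ∑ i ∈ A, x i := by
  classical
  obtain ⟨B, hB, hsum⟩ := exists_sum_eq_maxSum x (card_le_univ A)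
  rw [← hsum, ← sum_sdiff_le_sum_sdiff]
  have hcard : #(B \ A) = #(A \ B) :=
    (card_sdiff_le_card_sdiff_iff.2 hB.le).antisymm (card_sdiff_le_card_sdiff_iff.2 hB.ge)
  let e := equivOfCardEq hcard
  rw [← sum_coe_sort (B \ A), ← sum_coe_sort (A \ B), ← e.sum_comp]
  exact sum_le_sum fun j _ =>
    hA _ (mem_sdiff.1 (e j).2).1 _ (mem_sdiff.1 j.2).2

theorem setOf_sum_eq_setOf_mem_powersetCard (x : ι → ℝ) (k : ℕ) :
    {s : ℝ | ∃ A : Finset ι, #A = k ∧ s = ∑ i ∈ A, x i} =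
      {s | s ∈ ((univ.val.map x).powersetCard k).map Multiset.sum} := by
  ext s
  simp only [Set.mem_ofPred_eq, Multiset.powersetCard_map, Multiset.mem_map,
    exists_exists_and_eq_and, Multiset.mem_powersetCard]
  constructor
  · rintro ⟨A, hA, rfl⟩
    exact ⟨A.val, ⟨val_le_iff.2 (subset_univ A), hA⟩, rfl⟩
  · rintro ⟨t, ⟨ht, hcard⟩, rfl⟩
    exact ⟨⟨t, Multiset.nodup_of_le ht univ.nodup⟩, hcard, rfl⟩

theorem maxSum_congr {y : κ → ℝ} (h : univ.val.map x = univ.val.map y) (k : ℕ) :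
    maxSum x k = maxSum y k := by
  unfold maxSum
  rw [setOf_sum_eq_setOf_mem_powersetCard, setOf_sum_eq_setOf_mem_powersetCard, h]

theorem maxSum_comp_equiv (e : κ ≃ ι) (x : ι → ℝ) (k : ℕ) : maxSum (x ∘ e) k = maxSum x k :=
  maxSum_congr (by rw [← Multiset.map_map, Multiset.map_univ_val_equiv]) k

theorem lt_card_filter_ne_zero_of_maxSum_lt_sum (hx : 0 ≤ x) (hk : k ≤ Fintype.card ι)
    (h : maxSum x k < ∑ i ∈ A, x i) : k < #{i ∈ A | x i ≠ 0} := by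
  by_contra! hcard
  rw [← sum_filter_ne_zero] at h
  exact h.not_ge (sum_le_maxSum_of_card_le hx hcard hk)

end MaxSum

section Rearrangement

variable {α : Type*}

theorem exists_perm_antivary [Finite α] {β γ : Type*} [LinearOrder β] [LinearOrder γ]
    (f : α → β) (g : α → γ) : ∃ σ : Equiv.Perm α, Antivary (f ∘ σ) g := by
  obtain ⟨_, ⟨e⟩⟩ := Finite.exists_equiv_fin α
  let τ := Tuple.sort (OrderDual.toDual ∘ f ∘ e.symm)
  let ρ := Tuple.sort (g ∘ e.symm)
  refine ⟨e.trans (ρ.symm.trans (τ.trans e.symm)), fun i j hij => ?_⟩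
  have hpos : ρ.symm (e i) < ρ.symm (e j) :=
    (Tuple.monotone_sort (g ∘ e.symm)).reflect_lt (by simpa [ρ] using hij)
  exact Tuple.monotone_sort (OrderDual.toDual ∘ f ∘ e.symm) hpos.le

theorem exists_perm_forall_le_of_subset [Finite α] {β : Type*} [LinearOrder β]
    {A G : Finset α} (hAG : A ⊆ G) (f : α → β) :
    ∃ σ : Equiv.Perm α, (∀ a ∈ A, ∀ b ∉ A, f (σ b) ≤ f (σ a)) ∧
      ∀ a ∈ G, ∀ b ∉ G, f (σ b) ≤ f (σ a) := by
  classical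
  let level : α → ℕ := fun a => if a ∈ A then 0 else if a ∈ G then 1 else 2
  obtain ⟨σ, hσ⟩ := exists_perm_antivary f level
  refine ⟨σ, fun a ha b hb => hσ ?_, fun a ha b hb => hσ ?_⟩
  · simp only [level, if_pos ha, if_neg hb]
    split_ifs <;> decide
  · simp only [level, if_pos ha, if_neg hb, if_neg fun h => hb (hAG h)]
    split_ifs <;> decide

variable [Fintype α]

theorem mem_of_ne_zero_of_card_le {f : α → ℝ} (hf : 0 ≤ f) {G : Finset α}
    (hG : ∀ a ∈ G, ∀ b ∉ G, f b ≤ f a) (hcard : #{a | f a ≠ 0} ≤ #G) {b : α} (hb : f b ≠ 0) :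
    b ∈ G := by
  by_contra hbG
  have hpos : ∀ a ∈ G, f a ≠ 0 := fun a ha =>
    (((hf b).lt_of_ne' hb).trans_le (hG a ha b hbG)).ne'
  have hssub : G ⊂ ({a | f a ≠ 0} : Finset α) :=
    (ssubset_iff_of_subset fun a ha => by simpa using hpos a ha).2 ⟨b, by simpa using hb, hbG⟩
  exact (card_lt_card hssub).not_ge hcard

theorem exists_notMem_forall_ne_zero_le {f : α → ℝ} {A : Finset α}
    (hA : ∀ a ∈ A, ∀ b ∉ A, f b ≤ f a) (hcard : #A < #{a | f a ≠ 0}) :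
    ∃ p ∉ A, f p ≠ 0 ∧ ∀ a, f a ≠ 0 → f p ≤ f a := by
  classical
  obtain ⟨b, hb, hbA⟩ := exists_mem_notMem_of_card_lt_card hcard
  obtain ⟨p, hp, hpmin⟩ := exists_min_image (({a | f a ≠ 0} : Finset α) \ A) f
    ⟨b, mem_sdiff.2 ⟨hb, hbA⟩⟩
  obtain ⟨hp0, hpA⟩ : f p ≠ 0 ∧ p ∉ A := by simpa using hp
  refine ⟨p, hpA, hp0, fun a ha => ?_⟩
  by_cases haA : a ∈ A
  · exact hA a haA p hpA
  · exact hpmin a (by simp [ha, haA])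

theorem card_filter_comp_equiv_ne_zero (f : α → ℝ) (σ : Equiv.Perm α) :
    #{a | (f ∘ σ) a ≠ 0} = #{a | f a ≠ 0} :=
  card_equiv σ (by simp)

end Rearrangement

theorem lt_of_pred_mul_lt_of_le_mul_pred {d k r : ℕ} (hlow : (k - 1) * d < r)
    (hhigh : r ≤ k * (d - 1)) : k < d := by
  rcases k with _ | k
  · omega
  rcases d with _ | d
  · omega
  · simp only [Nat.add_sub_cancel] at hlow hhigh
    nlinarith

theorem add_pred_lt_add_of_mul_lt_mul {a b d k : ℕ} (hkd : k ≤ d) (hd : d ≤ a ∨ d ≤ b)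
    (h : (k - 1) * d < a * b) : k + (d - 1) < a + b := by
  wlog hda : d ≤ a generalizing a b
  · rw [add_comm a]
    exact this hd.symm (mul_comm a b ▸ h) (hd.resolve_left hda)
  by_contra! hab
  -- `a * (k - 1 + d - a) - (k - 1) * d = -(a - d) * (a - (k - 1)) ≤ 0`
  obtain ⟨t, rfl⟩ := Nat.exists_eq_add_of_le hda
  rcases Nat.eq_zero_or_pos k with rfl | hk
  · have : b = 0 := by omega
    simp [this] at h
  have hb : b + t ≤ k - 1 := by omega
  have hkd' : k - 1 ≤ d := by omega
  nlinarith

section Marginals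

variable {ι κ : Type*} [Fintype ι] [Fintype κ] {f : ι × κ → ℝ}

/-- The column sums of a real `ι × κ` table followed by its row sums. This is the order of
`λ(tr_1) ⊕ λ(tr_2)`: tracing out the row index leaves the column sums. -/
def marginals (f : ι × κ → ℝ) : κ ⊕ ι → ℝ :=
  Sum.elim (fun s => ∑ i, f (i, s)) (fun i => ∑ s, f (i, s))

theorem sum_marginals (f : ι × κ → ℝ) : ∑ j, marginals f j = 2 * ∑ z, f z := by
  simp only [marginals, Fintype.sum_sum_type, Sum.elim_inl, Sum.elim_inr,
    ← Fintype.sum_prod_type, ← Fintype.sum_prod_type_right, two_mul]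

theorem marginals_nonneg (hf : 0 ≤ f) : 0 ≤ marginals f := by
  rintro (s | i) <;> exact sum_nonneg fun _ _ => hf _

theorem le_marginals_inl (hf : 0 ≤ f) (z : ι × κ) : f z ≤ marginals f (.inl z.2) :=
  single_le_sum (f := fun i => f (i, z.2)) (fun _ _ => hf _) (mem_univ z.1)

theorem le_marginals_inr (hf : 0 ≤ f) (z : ι × κ) : f z ≤ marginals f (.inr z.1) :=
  single_le_sum (f := fun s => f (z.1, s)) (fun _ _ => hf _) (mem_univ z.2)

/-- The rows of a table that contain a nonzero entry. -/
noncomputable def nonzeroRows [DecidableEq ι] (f : ι × κ → ℝ) : Finset ι :=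
  image Prod.fst {z | f z ≠ 0}

/-- The columns of a table that contain a nonzero entry. -/
noncomputable def nonzeroCols [DecidableEq κ] (f : ι × κ → ℝ) : Finset κ :=
  image Prod.snd {z | f z ≠ 0}

section

variable [DecidableEq ι] [DecidableEq κ]

theorem card_filter_ne_zero_le_mul (f : ι × κ → ℝ) :
    #{z | f z ≠ 0} ≤ #(nonzeroRows f) * #(nonzeroCols f) :=
  (card_le_card subset_product).trans_eq (card_product _ _)

theorem lt_card_nonzeroRows_or_nonzeroCols (hf : 0 ≤ f) {m : ℕ} (hm : m ≤ Fintype.card (ι × κ))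
    {j : κ ⊕ ι} (hj : maxSum f m < marginals f j) :
    m < #(nonzeroRows f) ∨ m < #(nonzeroCols f) := by
  rcases j with s | i
  · left
    have hcol : marginals f (.inl s) = ∑ z ∈ univ ×ˢ {s}, f z := by simp [marginals]
    refine (lt_card_filter_ne_zero_of_maxSum_lt_sum hf hm (hcol ▸ hj)).trans_le
      (card_le_card_of_injOn Prod.fst (fun z hz => mem_image_of_mem _ ?_) ?_)
    · simpa using (mem_filter.1 hz).2
    · rintro ⟨i, t⟩ hz ⟨i', t'⟩ hz' rfl
      simp_all
  · right
    have hrow : marginals f (.inr i) = ∑ z ∈ {i} ×ˢ univ, f z := by simp [marginals]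
    refine (lt_card_filter_ne_zero_of_maxSum_lt_sum hf hm (hrow ▸ hj)).trans_le
      (card_le_card_of_injOn Prod.snd (fun z hz => mem_image_of_mem _ ?_) ?_)
    · simpa using (mem_filter.1 hz).2
    · rintro ⟨i, t⟩ hz ⟨i', t'⟩ hz' rfl
      simp_all

theorem maxSum_marginals_le (hf : 0 ≤ f) {c : ℝ} (hc : ∀ z, f z ≠ 0 → c ≤ f z) {n : ℕ}
    (hn : n < #(nonzeroRows f) + #(nonzeroCols f)) :
    maxSum (marginals f) n ≤ 2 * ∑ z, f z - c := by
  set Z := (nonzeroCols f).disjSum (nonzeroRows f) with hZ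
  have hnZ : n < #Z := by rwa [hZ, card_disjSum, add_comm]
  have hcZ : ∀ j ∈ Z, c ≤ marginals f j := by
    rintro (s | i) hj
    · obtain ⟨z, hz, rfl⟩ := mem_image.1 (inl_mem_disjSum.1 hj)
      exact (hc z (mem_filter.1 hz).2).trans (le_marginals_inl hf z)
    · obtain ⟨z, hz, rfl⟩ := mem_image.1 (inr_mem_disjSum.1 hj)
      exact (hc z (mem_filter.1 hz).2).trans (le_marginals_inr hf z)
  obtain ⟨B, rfl, hB⟩ := exists_sum_eq_maxSum (marginals f) (hnZ.le.trans (card_le_univ Z))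
  obtain ⟨j, hjZ, hjB⟩ := exists_mem_notMem_of_card_lt_card hnZ
  have htotal : ∑ i ∈ insert j B, marginals f i ≤ 2 * ∑ z, f z :=
    (sum_le_univ_sum_of_nonneg (marginals_nonneg hf)).trans_eq (sum_marginals f)
  rw [sum_insert hjB] at htotal
  linarith [hcZ j hjZ]

end

theorem maxSum_marginals_le_of_maxSum_lt (hf : 0 ≤ f) {c : ℝ} (hc : ∀ z, f z ≠ 0 → c ≤ f z)
    {d k : ℕ} (hkd : k ≤ d) (hd : d - 1 ≤ Fintype.card (ι × κ))
    (hsupp : (k - 1) * d < #{z | f z ≠ 0}) (hlt : maxSum f (d - 1) < maxSum (marginals f) 1) :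
    maxSum (marginals f) (k + (d - 1)) ≤ 2 * ∑ z, f z - c := by
  classical
  obtain ⟨z, -⟩ := card_pos.1 (hsupp.trans_le' (Nat.zero_le _))
  have : Nonempty (κ ⊕ ι) := ⟨.inl z.2⟩
  obtain ⟨B, hB, hBsum⟩ := exists_sum_eq_maxSum (marginals f) (Fintype.card_pos (α := κ ⊕ ι))
  obtain ⟨j, rfl⟩ := card_eq_one.1 hB
  rw [← hBsum, sum_singleton] at hlt
  have hlarge := lt_card_nonzeroRows_or_nonzeroCols hf hd hlt
  exact maxSum_marginals_le hf hc (add_pred_lt_add_of_mul_lt_mul hkd (by omega)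
    (hsupp.trans_le (card_filter_ne_zero_le_mul f)))

end Marginals

section SwapAverage

/-- The average of `f` and `f ∘ swap p q`: this is the diagonal left by conjugating `diagonal f`
with `sqrtSwap p q`. -/
noncomputable def swapAverage {α : Type*} [DecidableEq α] (p q : α) (f : α → ℝ) : α → ℝ :=
  fun z => (f z + f (Equiv.swap p q z)) / 2

section

variable {α : Type*} [DecidableEq α] {p q z : α} {f : α → ℝ}

theorem swapAverage_right : swapAverage p q f q = (f q + f p) / 2 := by
  simp [swapAverage]

theorem swapAverage_of_ne_of_ne (hp : z ≠ p) (hq : z ≠ q) : swapAverage p q f z = f z := by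
  simp [swapAverage, Equiv.swap_apply_of_ne_of_ne hp hq]

theorem sum_swapAverage [Fintype α] (p q : α) (f : α → ℝ) :
    ∑ z, swapAverage p q f z = ∑ z, f z := by
  simp only [swapAverage]
  rw [← sum_div, sum_add_distrib, Equiv.sum_comp, add_self_div_two]

end

variable {ι κ : Type*} [Fintype ι] [Fintype κ] [DecidableEq ι] [DecidableEq κ]
  {f : ι × κ → ℝ} {R : Finset ι} {p : ι × κ} {i₀ : ι} {s₀ : κ}

theorem maxSum_lt_maxSum_marginals_swapAverage (hp : p.1 ≠ i₀) (hpos : 0 < f (i₀, s₀) + f p)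
    {m : ℕ} (hrow : maxSum f m ≤ ∑ s ∈ univ.erase s₀, f (i₀, s)) :
    maxSum f m < maxSum (marginals (swapAverage p (i₀, s₀) f)) 1 :=
  calc
    maxSum f m < ∑ s ∈ univ.erase s₀, f (i₀, s) + (f (i₀, s₀) + f p) / 2 := by linarith
    _ = ∑ s ∈ univ.erase s₀, swapAverage p (i₀, s₀) f (i₀, s)
          + swapAverage p (i₀, s₀) f (i₀, s₀) := by
      rw [swapAverage_right]
      congr 1
      refine sum_congr rfl fun s hs => (swapAverage_of_ne_of_ne ?_ ?_).symm
      · exact fun h => hp (congrArg Prod.fst h).symm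
      · exact fun h => (mem_erase.1 hs).1 (congrArg Prod.snd h)
    _ = ∑ j ∈ {Sum.inr i₀}, marginals (swapAverage p (i₀, s₀) f) j := by
      rw [sum_erase_add _ _ (mem_univ s₀), sum_singleton, marginals, Sum.elim_inr]
    _ ≤ maxSum (marginals (swapAverage p (i₀, s₀) f)) 1 := sum_le_maxSum _ {Sum.inr i₀}

theorem le_maxSum_marginals_swapAverage (hi₀ : i₀ ∈ R)
    (hf : ∀ z, f z ≠ 0 → z.1 ∈ R ∧ z.2 ≠ s₀) (hp : f p ≠ 0) :
    2 * ∑ z, f z - f p / 2 ≤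
      maxSum (marginals (swapAverage p (i₀, s₀) f)) (#R + (Fintype.card κ - 1)) := by
  set N := swapAverage p (i₀, s₀) f with hN
  have hcol₀ : ∀ i, f (i, s₀) = 0 := fun i => of_not_not fun h => (hf _ h).2 rfl
  have hrows : ∑ i ∈ R, ∑ s, N (i, s) = ∑ z, f z := by
    rw [← sum_swapAverage p (i₀, s₀) f, Fintype.sum_prod_type]
    refine sum_subset (subset_univ R) fun i _ hi => sum_eq_zero fun s _ => ?_
    rw [hN, swapAverage_of_ne_of_ne]
    · exact of_not_not fun h => hi (hf _ h).1
    · exact fun h => hi (by simpa [← h] using (hf p hp).1)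
    · exact fun h => hi (by rwa [show i = i₀ from congrArg Prod.fst h])
  have hcol : ∑ i, N (i, s₀) = f p / 2 := by
    rw [Fintype.sum_eq_single i₀ fun i hi => ?_, hN, swapAverage_right, hcol₀, zero_add]
    rw [hN, swapAverage_of_ne_of_ne, hcol₀]
    · exact fun h => (hf p hp).2 (by simp [← h])
    · exact fun h => hi (congrArg Prod.fst h)
  have hcols : ∑ s ∈ univ.erase s₀, ∑ i, N (i, s) = ∑ z, f z - f p / 2 := by
    rw [sum_erase_eq_sub (mem_univ s₀), hcol, ← Fintype.sum_prod_type_right, sum_swapAverage]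
  have hcard : #((univ.erase s₀).disjSum R) = #R + (Fintype.card κ - 1) := by
    rw [card_disjSum, card_erase_of_mem (mem_univ s₀), card_univ, add_comm]
  calc
    2 * ∑ z, f z - f p / 2 = ∑ j ∈ (univ.erase s₀).disjSum R, marginals N j := by
      simp only [sum_disjSum, marginals, Sum.elim_inl, Sum.elim_inr, hrows, hcols]
      ring
    _ ≤ _ := hcard ▸ sum_le_maxSum _ _

theorem exists_perm_swapAverage (hf : 0 ≤ f) {k : ℕ} (hk : k ≤ Fintype.card ι)
    (hlow : Fintype.card κ - 1 < #{z | f z ≠ 0})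
    (hhigh : #{z | f z ≠ 0} ≤ k * (Fintype.card κ - 1)) :
    ∃ (σ : Equiv.Perm (ι × κ)) (p q : ι × κ), p.1 ≠ q.1 ∧ p.2 ≠ q.2 ∧
      0 < f (σ p) ∧ (∀ z, f z ≠ 0 → f (σ p) ≤ f z) ∧
      maxSum f (Fintype.card κ - 1) < maxSum (marginals (swapAverage p q (f ∘ σ))) 1 ∧
      2 * ∑ z, f z - f (σ p) / 2 ≤
        maxSum (marginals (swapAverage p q (f ∘ σ))) (k + (Fintype.card κ - 1)) := by
  obtain ⟨⟨-, s₀⟩, -⟩ := card_pos.1 (hlow.trans_le' (Nat.zero_le _))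
  obtain ⟨R, -, rfl⟩ := exists_subset_card_eq (s := (univ : Finset ι)) hk
  obtain ⟨i₀, hi₀⟩ : R.Nonempty := card_pos.1 <| Nat.pos_of_mul_pos_right <|
    (hlow.trans_le' (Nat.zero_le _)).trans_le hhigh
  let A : Finset (ι × κ) := {i₀} ×ˢ univ.erase s₀
  let G : Finset (ι × κ) := R ×ˢ univ.erase s₀
  have hAcard : #A = Fintype.card κ - 1 := by simp [A]
  have hGcard : #G = #R * (Fintype.card κ - 1) := by simp [G]
  obtain ⟨σ, hσA, hσG⟩ := exists_perm_forall_le_of_subset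
    (A := A) (G := G) (product_subset_product_left (singleton_subset_iff.2 hi₀)) f
  set L := f ∘ σ with hL
  have hL0 : 0 ≤ L := fun z => hf (σ z)
  rw [← card_filter_comp_equiv_ne_zero f σ] at hlow hhigh
  have hLG : ∀ z, L z ≠ 0 → z.1 ∈ R ∧ z.2 ≠ s₀ := fun z hz => by
    simpa [G] using mem_of_ne_zero_of_card_le hL0 hσG (hhigh.trans_eq hGcard.symm) hz
  obtain ⟨p, hpA, hp0, hpleast⟩ := exists_notMem_forall_ne_zero_le hσA (hAcard.trans_lt hlow)
  have hps₀ : p.2 ≠ s₀ := (hLG p hp0).2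
  have hpi₀ : p.1 ≠ i₀ := fun h =>
    hpA (mem_product.2 ⟨mem_singleton.2 h, mem_erase.2 ⟨hps₀, mem_univ _⟩⟩)
  have hppos : 0 < L p := (hL0 p).lt_of_ne' hp0
  have hrow : maxSum L (Fintype.card κ - 1) ≤ ∑ s ∈ univ.erase s₀, L (i₀, s) := by
    rw [← hAcard, ← sum_singleton (fun i => ∑ s ∈ univ.erase s₀, L (i, s)) i₀, ← sum_product]
    exact maxSum_card_le_sum hσA
  refine ⟨σ, p, (i₀, s₀), hpi₀, hps₀, hppos, fun z hz => ?_, ?_, ?_⟩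
  · simpa [hL] using hpleast (σ.symm z) (by simpa [hL] using hz)
  · rw [← maxSum_comp_equiv σ f]
    exact maxSum_lt_maxSum_marginals_swapAverage hpi₀ (add_pos_of_nonneg_of_pos (hL0 _) hppos) hrow
  · rw [← Equiv.sum_comp σ f]
    exact le_maxSum_marginals_swapAverage hi₀ hLG hp0

end SwapAverage

section SqrtSwap

variable {n : Type*} [DecidableEq n]

/-- A square root of the swap matrix `S` of `p` and `q`; the coefficients are chosen so that
`((1 + i) / 2 + (1 - i) / 2 * S) ^ 2 = S` follows from `S ^ 2 = 1`. -/
noncomputable def sqrtSwap (p q : n) : Matrix n n ℂ :=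
  ((1 + Complex.I) / 2) • 1 + ((1 - Complex.I) / 2) • Matrix.swap ℂ p q

theorem conjTranspose_sqrtSwap (p q : n) :
    (sqrtSwap p q)ᴴ =
      ((1 - Complex.I) / 2) • 1 + ((1 + Complex.I) / 2) • Matrix.swap ℂ p q := by
  simp [sqrtSwap, sub_eq_add_neg]

variable [Fintype n]

theorem sqrtSwap_conj (p q : n) (A : Matrix n n ℂ) :
    sqrtSwap p q * A * (sqrtSwap p q)ᴴ =
      (1 / 2 : ℂ) • (A + Matrix.swap ℂ p q * A * Matrix.swap ℂ p q) +
        (Complex.I / 2) • (A * Matrix.swap ℂ p q - Matrix.swap ℂ p q * A) := by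
  rw [conjTranspose_sqrtSwap, sqrtSwap]
  simp only [add_mul, mul_add, smul_mul_assoc, mul_smul_comm, one_mul, mul_one]
  match_scalars <;> (ring_nf; simp only [Complex.I_sq]; norm_num)

theorem sqrtSwap_mem_unitaryGroup (p q : n) : sqrtSwap p q ∈ unitaryGroup n ℂ := by
  have h := sqrtSwap_conj p q (1 : Matrix n n ℂ)
  rw [mul_one, mul_one, one_mul, swap_mul_self, sub_self, smul_zero, add_zero, ← two_smul ℂ,
    smul_smul] at h
  rw [mem_unitaryGroup_iff, star_eq_conjTranspose, h]
  norm_num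

theorem swap_mul_diagonal_mul_swap (p q : n) (f : n → ℂ) :
    Matrix.swap ℂ p q * diagonal f * Matrix.swap ℂ p q = diagonal (f ∘ Equiv.swap p q) := by
  rw [Matrix.swap, Equiv.Perm.permMatrix, PEquiv.toMatrix_toPEquiv_mul,
    PEquiv.mul_toMatrix_toPEquiv, submatrix_submatrix, Equiv.symm_swap]
  exact submatrix_diagonal_equiv f (Equiv.swap p q)

theorem diagonal_mul_swap_sub_swap_mul_diagonal_apply (p q : n) (f : n → ℂ) (a b : n) :
    (diagonal f * Matrix.swap ℂ p q - Matrix.swap ℂ p q * diagonal f) a b =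
      if Equiv.swap p q a = b then f a - f b else 0 := by
  rw [Matrix.sub_apply, diagonal_mul, mul_diagonal, Matrix.swap, Equiv.Perm.permMatrix,
    PEquiv.toMatrix_apply]
  simp only [Equiv.toPEquiv_apply, Option.mem_def, Option.some_inj]
  split_ifs <;> simp

theorem sqrtSwap_conj_diagonal_apply_self (p q : n) (f : n → ℝ) (a : n) :
    (sqrtSwap p q * diagonal (fun z => (f z : ℂ)) * (sqrtSwap p q)ᴴ) a a =
      (swapAverage p q f a : ℂ) := by
  rw [sqrtSwap_conj, swap_mul_diagonal_mul_swap, Matrix.add_apply, Matrix.smul_apply,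
    Matrix.smul_apply,
    diagonal_mul_swap_sub_swap_mul_diagonal_apply, sub_self, ite_self, smul_zero, add_zero,
    Matrix.add_apply, diagonal_apply_eq, diagonal_apply_eq, swapAverage]
  push_cast [Function.comp_apply, smul_eq_mul]
  ring

theorem sqrtSwap_conj_diagonal_apply_eq_zero (p q : n) (f : n → ℂ) {a b : n} (hab : a ≠ b)
    (hswap : Equiv.swap p q a ≠ b) :
    (sqrtSwap p q * diagonal f * (sqrtSwap p q)ᴴ) a b = 0 := by
  rw [sqrtSwap_conj, swap_mul_diagonal_mul_swap, Matrix.add_apply, Matrix.smul_apply,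
    Matrix.smul_apply,
    diagonal_mul_swap_sub_swap_mul_diagonal_apply, if_neg hswap, Matrix.add_apply,
    diagonal_apply_ne _ hab, diagonal_apply_ne _ hab, add_zero, smul_zero, smul_zero, add_zero]

end SqrtSwap

theorem map_univ_eigenvalues_of_eq_diagonal {𝕜 n : Type*} [RCLike 𝕜] [Fintype n] [DecidableEq n]
    {A : Matrix n n 𝕜} (hA : A.IsHermitian) {f : n → ℝ}
    (h : A = diagonal fun i => (f i : 𝕜)) :
    univ.val.map hA.eigenvalues = univ.val.map f := by
  have hroots : A.charpoly.roots = univ.val.map fun i => (f i : 𝕜) := by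
    rw [h, charpoly_diagonal, Polynomial.roots_prod _ _
      (prod_ne_zero_iff.2 fun i _ => Polynomial.X_sub_C_ne_zero _)]
    simp
  have hmap := congrArg (Multiset.map RCLike.re)
    (hA.roots_charpoly_eq_eigenvalues.symm.trans hroots)
  rw [Multiset.map_map, Multiset.map_map] at hmap
  simpa [Function.comp_def] using! hmap

theorem exists_unitary_conj_eq_diagonal {𝕜 n : Type*} [RCLike 𝕜] [Fintype n] [DecidableEq n]
    {A : Matrix n n 𝕜} (hA : A.IsHermitian) (σ : Equiv.Perm n) :
    ∃ V ∈ unitaryGroup n 𝕜, V * A * Vᴴ = diagonal fun i => (hA.eigenvalues (σ i) : 𝕜) := by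
  have hspec := hA.conjStarAlgAut_star_eigenvectorUnitary
  rw [Unitary.conjStarAlgAut_star_apply] at hspec
  let W : Matrix n n 𝕜 := ↑hA.eigenvectorUnitary
  have hstar : ((star W).submatrix σ id)ᴴ = W.submatrix id σ := by
    rw [conjTranspose_submatrix, star_eq_conjTranspose, conjTranspose_conjTranspose]
  refine ⟨(star W).submatrix σ id, ?_, ?_⟩
  · refine mem_unitaryGroup_iff.2 ?_
    calc
      (star W).submatrix σ id * ((star W).submatrix σ id)ᴴ = (star W * W).submatrix σ σ := by
        rw [hstar]
        rfl
      _ = 1 := by rw [Unitary.coe_star_mul_self, submatrix_one_equiv]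
  · rw [hstar]
    calc
      (star W).submatrix σ id * A * W.submatrix id σ = (star W * A * W).submatrix σ σ := rfl
      _ = diagonal fun i => (hA.eigenvalues (σ i) : 𝕜) := by
        rw [hspec]
        exact submatrix_diagonal_equiv _ σ

theorem map_univ_sum_elim {ι κ α : Type*} [Fintype ι] [Fintype κ] (x : ι → α) (y : κ → α) :
    univ.val.map (Sum.elim x y) = univ.val.map x + univ.val.map y := by
  rw [← univ_disjSum_univ, val_disjSum, Multiset.disjSum, Multiset.map_add]
  simp

section PartialTrace

variable {d1 d2 : ℕ} {M : Matrix (Fin d1 × Fin d2) (Fin d1 × Fin d2) ℂ} {f : Fin d1 × Fin d2 → ℝ}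

theorem ptrace1_eq_diagonal (hdiag : ∀ z, M z z = f z)
    (hoff : ∀ i s t, s ≠ t → M (i, s) (i, t) = 0) :
    ptrace1 M = diagonal fun s => ((∑ i, f (i, s) : ℝ) : ℂ) := by
  ext s t
  rcases eq_or_ne s t with rfl | hst
  · simp [ptrace1, hdiag]
  · rw [diagonal_apply_ne _ hst]
    exact sum_eq_zero (s := univ) fun i _ => hoff i s t hst

theorem ptrace2_eq_diagonal (hdiag : ∀ z, M z z = f z)
    (hoff : ∀ i j s, i ≠ j → M (i, s) (j, s) = 0) :
    ptrace2 M = diagonal fun i => ((∑ s, f (i, s) : ℝ) : ℂ) := by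
  ext i j
  rcases eq_or_ne i j with rfl | hij
  · simp [ptrace2, hdiag]
  · rw [diagonal_apply_ne _ hij]
    exact sum_eq_zero (s := univ) fun s _ => hoff i j s hij

theorem maxSum_eigenvalues_ptrace (h1 : (ptrace1 M).IsHermitian) (h2 : (ptrace2 M).IsHermitian)
    (hdiag : ∀ z, M z z = f z) (hoff : ∀ z w, z ≠ w → z.1 = w.1 ∨ z.2 = w.2 → M z w = 0)
    (k : ℕ) : maxSum (Sum.elim h1.eigenvalues h2.eigenvalues) k = maxSum (marginals f) k := by
  have hp1 := ptrace1_eq_diagonal hdiag fun i s t hst =>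
    hoff (i, s) (i, t) (by simp [hst]) (.inl rfl)
  have hp2 := ptrace2_eq_diagonal hdiag fun i j s hij =>
    hoff (i, s) (j, s) (by simp [hij]) (.inr rfl)
  refine maxSum_congr ?_ k
  rw [marginals, map_univ_sum_elim, map_univ_sum_elim]
  exact congrArg₂ (· + ·) (map_univ_eigenvalues_of_eq_diagonal h1 hp1)
    (map_univ_eigenvalues_of_eq_diagonal h2 hp2)

end PartialTrace

theorem swap_apply_ne_of_fst_eq_or_snd_eq {ι κ : Type*} [DecidableEq ι] [DecidableEq κ]
    {p q z w : ι × κ} (h1 : p.1 ≠ q.1) (h2 : p.2 ≠ q.2) (hzw : z ≠ w)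
    (h : z.1 = w.1 ∨ z.2 = w.2) : Equiv.swap p q z ≠ w := by
  intro hw
  rw [Equiv.swap_apply_def] at hw
  split_ifs at hw with hp hq
  · subst hp hw
    exact h.elim h1 h2
  · subst hq hw
    exact h.elim h1.symm h2.symm
  · exact hzw hw

section RankBetweenMultiples

variable {d1 d2 : ℕ} {C : Matrix (Fin d1 × Fin d2) (Fin d1 × Fin d2) ℂ}

theorem exists_unitary_maxSum_eigenvalues_ptrace (hC : C.IsHermitian)
    (σ : Equiv.Perm (Fin d1 × Fin d2)) {p q : Fin d1 × Fin d2} (h1 : p.1 ≠ q.1) (h2 : p.2 ≠ q.2) :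
    ∃ U ∈ unitaryGroup (Fin d1 × Fin d2) ℂ,
      ∀ (hU1 : (ptrace1 (U * C * Uᴴ)).IsHermitian) (hU2 : (ptrace2 (U * C * Uᴴ)).IsHermitian)
        (n : ℕ), maxSum (Sum.elim hU1.eigenvalues hU2.eigenvalues) n =
          maxSum (marginals (swapAverage p q (hC.eigenvalues ∘ σ))) n := by
  obtain ⟨V, hV, hVC⟩ := exists_unitary_conj_eq_diagonal hC σ
  have hconj : sqrtSwap p q * V * C * (sqrtSwap p q * V)ᴴ =
      sqrtSwap p q * diagonal (fun z => ((hC.eigenvalues ∘ σ) z : ℂ)) * (sqrtSwap p q)ᴴ := by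
    rw [conjTranspose_mul, ← Matrix.mul_assoc, Matrix.mul_assoc _ V, Matrix.mul_assoc _ _ Vᴴ, hVC]
    rfl
  refine ⟨sqrtSwap p q * V, mul_mem (sqrtSwap_mem_unitaryGroup p q) hV, fun hU1 hU2 n =>
    maxSum_eigenvalues_ptrace hU1 hU2 (fun z => ?_) (fun z w hzw h => ?_) n⟩
  · rw [hconj, sqrtSwap_conj_diagonal_apply_self]
  · rw [hconj, sqrtSwap_conj_diagonal_apply_eq_zero _ _ _ hzw
      (swap_apply_ne_of_fst_eq_or_snd_eq h1 h2 hzw h)]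

theorem rank_between_multiples_general (hC : C.PosSemidef) {k : ℕ} (hk2 : 2 ≤ k) (hkd : k ≤ d1)
    (hlow : (k - 1) * d2 < C.rank) (hhigh : C.rank ≤ k * (d2 - 1)) :
    ∃ U ∈ unitaryGroup (Fin d1 × Fin d2) ℂ,
      ∀ D : Matrix (Fin d1 × Fin d2) (Fin d1 × Fin d2) ℂ, D.IsDiag →
        (∃ g : Equiv.Perm (Fin d1 × Fin d2), ∀ p, D p p = (hC.1.eigenvalues (g p) : ℂ)) →
        ∀ (hU1 : (ptrace1 (U * C * Uᴴ)).IsHermitian) (hU2 : (ptrace2 (U * C * Uᴴ)).IsHermitian)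
          (hD1 : (ptrace1 D).IsHermitian) (hD2 : (ptrace2 D).IsHermitian),
          ¬ WeakMajorizes (Sum.elim hU1.eigenvalues hU2.eigenvalues)
              (Sum.elim hD1.eigenvalues hD2.eigenvalues) := by
  set f := hC.1.eigenvalues
  have hf0 : 0 ≤ f := hC.eigenvalues_nonneg
  have hrank : C.rank = #{z | f z ≠ 0} := by
    rw [hC.1.rank_eq_card_non_zero_eigs, Fintype.card_subtype]
  rw [hrank] at hlow hhigh
  have hkd2 : k < d2 := lt_of_pred_mul_lt_of_le_mul_pred hlow hhigh
  have hd2 : d2 - 1 < #{z | f z ≠ 0} :=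
    (Nat.pred_lt hkd2.ne_bot).trans_le ((Nat.le_mul_of_pos_left d2 (by omega)).trans hlow.le)
  obtain ⟨σ, p, q, h1, h2, hpos, hleast, hlt, hle⟩ := exists_perm_swapAverage (k := k) hf0
    (by simpa using hkd) (by simpa using hd2) (by simpa using hhigh)
  simp only [Fintype.card_fin] at hlt hle
  obtain ⟨U, hU, hUmax⟩ := exists_unitary_maxSum_eigenvalues_ptrace hC.1 σ h1 h2
  refine ⟨U, hU, fun D hD ⟨g, hg⟩ hU1 hU2 hD1 hD2 hmaj => ?_⟩
  have hDmax := maxSum_eigenvalues_ptrace (f := f ∘ g) hD1 hD2 hg fun _ _ hzw _ => hD hzw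
  have hmarg (n : ℕ) :
      maxSum (marginals (swapAverage p q (f ∘ σ))) n ≤ maxSum (marginals (f ∘ g)) n :=
    (hUmax hU1 hU2 n).symm.trans_le ((hmaj n).trans_eq (hDmax n))
  have hub : maxSum (marginals (f ∘ g)) (k + (d2 - 1)) ≤ 2 * ∑ z, (f ∘ g) z - f (σ p) :=
    maxSum_marginals_le_of_maxSum_lt (f := f ∘ g) (fun z => hf0 (g z)) (fun z => hleast (g z))
      hkd2.le (hd2.le.trans (card_le_univ _)) (by rwa [card_filter_comp_equiv_ne_zero])
      (by rw [maxSum_comp_equiv]; exact hlt.trans_le (hmarg 1))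
  rw [show ∑ z, (f ∘ g) z = ∑ z, f z from Equiv.sum_comp g f] at hub
  linarith [hmarg (k + (d2 - 1))]

end RankBetweenMultiples

theorem rank_between_multiples (d1 d2 : ℕ) (hd1 : 2 ≤ d1) (hd12 : d1 ≤ d2)
    (C : Matrix (Fin d1 × Fin d2) (Fin d1 × Fin d2) ℂ) (hC : C.PosSemidef)
    (k : ℕ) (hk2 : 2 ≤ k) (hkd : k ≤ d1)
    (hlow : (k - 1) * d2 < C.rank) (hhigh : C.rank ≤ k * (d2 - 1)) :
    ∃ U : Matrix (Fin d1 × Fin d2) (Fin d1 × Fin d2) ℂ,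
      U ∈ Matrix.unitaryGroup (Fin d1 × Fin d2) ℂ ∧
      ∀ D : Matrix (Fin d1 × Fin d2) (Fin d1 × Fin d2) ℂ, D.IsDiag →
        (∃ g : Equiv.Perm (Fin d1 × Fin d2), ∀ p, D p p = (hC.1.eigenvalues (g p) : ℂ)) →
        ∀ (hU1 : (ptrace1 (U * C * Uᴴ)).IsHermitian)
          (hU2 : (ptrace2 (U * C * Uᴴ)).IsHermitian)
          (hD1 : (ptrace1 D).IsHermitian) (hD2 : (ptrace2 D).IsHermitian),
          ¬ Majorizes (Sum.elim hU1.eigenvalues hU2.eigenvalues)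
              (Sum.elim hD1.eigenvalues hD2.eigenvalues) := by
  obtain ⟨U, hU, hnot⟩ := rank_between_multiples_general hC hk2 hkd hlow hhigh
  exact ⟨U, hU, fun D hD hg hU1 hU2 hD1 hD2 hmaj => hnot D hD hg hU1 hU2 hD1 hD2 hmaj.1⟩
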